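/- Let 0 < α < 1. There exists a constant c > 0, depending only on α, such that whenever f : ℂ → ℂ satisfies |f(z) − f(w)| ≤ C·|z − w|^α for all z, w ∈ ℂ, and N₁, N₂ are bounded normal operators on a complex Hilbert space, then ‖f(N₁) − f(N₂)‖ ≤ c·C·‖N₁ − N₂‖^α. In particular, every Hölder function of order α on the plane is operator Hölder of order α for normal operators. -/

import Mathlib

open MeasureTheory Complex FourierTransform

section opexp
variable {H : Type*} [NormedAddCommGroup H] [InnerProductSpace ℂ H] [CompleteSpace H]

lemma skew_exp_unitary (x : H →L[ℂ] H) (hx : star x = -x) (t : ℝ) :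
    NormedSpace.exp (t • x) ∈ unitary (H →L[ℂ] H) := by
  let +nondep : NormedAlgebra ℚ (H →L[ℂ] H) := .restrictScalars ℚ ℂ (H →L[ℂ] H)
  apply NormedSpace.exp_mem_unitary_of_mem_skewAdjoint
  rw [skewAdjoint.mem_iff]
  rw [star_smul, hx]; simp

lemma norm_exp_sub_exp_le (x y : H →L[ℂ] H) (hx : star x = -x) (hy : star y = -y) :
    ‖NormedSpace.exp x - NormedSpace.exp y‖ ≤ ‖x - y‖ := by
  let +nondep : NormedAlgebra ℚ (H →L[ℂ] H) := .restrictScalars ℚ ℂ (H →L[ℂ] H)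
  have h1 : ∀ t : ℝ, HasDerivAt (fun t : ℝ => NormedSpace.exp (t • x))
      (NormedSpace.exp (t • x) * x) t := fun t => hasDerivAt_exp_smul_const x t
  have h2 : ∀ t : ℝ, HasDerivAt (fun t : ℝ => NormedSpace.exp ((1 - t) • y))
      (-(y * NormedSpace.exp ((1 - t) • y))) t := fun t => by
    have := (hasDerivAt_exp_smul_const' y (1 - t)).scomp t ((hasDerivAt_id t).const_sub 1)
    simpa [Function.comp_def] using this
  have h3 := fun t => (h1 t).mul (h2 t)
  have := norm_image_sub_le_of_norm_deriv_le_segment_01' (C := ‖x - y‖)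
    (fun t _ => (h3 t).hasDerivWithinAt) (fun t _ => ?_)
  · simpa using this
  · have e : NormedSpace.exp (t • x) * x * NormedSpace.exp ((1 - t) • y) +
        NormedSpace.exp (t • x) * -(y * NormedSpace.exp ((1 - t) • y)) =
        NormedSpace.exp (t • x) * ((x - y) * NormedSpace.exp ((1 - t) • y)) := by
      noncomm_ring
    rw [e, CStarRing.norm_mem_unitary_mul _ (skew_exp_unitary x hx t),
      CStarRing.norm_mul_mem_unitary _ (skew_exp_unitary y hy _)]

/-- the operator `exp (2πi⟨ξ, N⟩)` -/
noncomputable def Eop (N : H →L[ℂ] H) (ξ : ℂ) : H →L[ℂ] H :=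
  NormedSpace.exp ((Real.pi * I) • (starRingEnd ℂ ξ • N + ξ • star N))

lemma Eop_skew (N : H →L[ℂ] H) (ξ : ℂ) :
    star (((Real.pi : ℂ) * I) • (starRingEnd ℂ ξ • N + ξ • star N)) =
      -(((Real.pi : ℂ) * I) • (starRingEnd ℂ ξ • N + ξ • star N)) := by
  simp only [star_smul, star_add, star_star]
  simp [add_comm]

lemma Eop_cont (N : H →L[ℂ] H) : Continuous (Eop N) := by
  let +nondep : NormedAlgebra ℚ (H →L[ℂ] H) := .restrictScalars ℚ ℂ (H →L[ℂ] H)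
  unfold Eop
  apply NormedSpace.exp_continuous.comp
  have : Continuous (starRingEnd ℂ) := Complex.continuous_conj
  fun_prop

lemma Eop_norm_apply (N : H →L[ℂ] H) (ξ : ℂ) (u : H) : ‖Eop N ξ u‖ = ‖u‖ := by
  have := skew_exp_unitary _ (Eop_skew N ξ) 1
  rw [one_smul] at this
  exact Unitary.norm_map (⟨_, this⟩ : unitary (H →L[ℂ] H)) u

lemma Eop_sub (N₁ N₂ : H →L[ℂ] H) (ξ : ℂ) :
    ‖Eop N₁ ξ - Eop N₂ ξ‖ ≤ 2 * Real.pi * ‖ξ‖ * ‖N₁ - N₂‖ := by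
  refine (norm_exp_sub_exp_le _ _ (Eop_skew N₁ ξ) (Eop_skew N₂ ξ)).trans ?_
  have : ((Real.pi : ℂ) * I) • (starRingEnd ℂ ξ • N₁ + ξ • star N₁)
    - ((Real.pi : ℂ) * I) • (starRingEnd ℂ ξ • N₂ + ξ • star N₂)
     = ((Real.pi : ℂ) * I) • (starRingEnd ℂ ξ • (N₁ - N₂) + ξ • star (N₁ - N₂)) := by
    simp only [star_sub, smul_sub, smul_add]; abel
  rw [this, norm_smul]
  have h := norm_add_le (starRingEnd ℂ ξ • (N₁ - N₂)) (ξ • star (N₁ - N₂))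
  rw [norm_smul, norm_smul, norm_star, RCLike.norm_conj] at h
  have : ‖(Real.pi : ℂ) * I‖ = Real.pi := by simp [abs_of_pos Real.pi_pos]
  rw [this]
  nlinarith [Real.pi_pos]

lemma Eop_eq_cfc (N : H →L[ℂ] H) (hN : IsStarNormal N) (ξ : ℂ) :
    Eop N ξ = cfc (fun z : ℂ => cexp (2 * Real.pi * (inner ℝ ξ z : ℝ) * I)) N := by
  have e : ((Real.pi : ℂ) * I) • (starRingEnd ℂ ξ • N + ξ • star N) =
      cfc (fun z : ℂ => 2 * Real.pi * (inner ℝ ξ z : ℝ) * I) N := by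
    have : (fun z : ℂ => 2 * Real.pi * (inner ℝ ξ z : ℝ) * I) =
      fun z : ℂ => ((Real.pi : ℂ) * I) • (starRingEnd ℂ ξ • z + ξ • star z) := by
      funext z
      have : (((inner ℝ ξ z : ℝ)) : ℂ) = (starRingEnd ℂ ξ * z + ξ * starRingEnd ℂ z) / 2 := by
        rw [Complex.inner, Complex.re_eq_add_conj]; simp; ring
      rw [this]; simp; ring
    rw [this, cfc_smul .., cfc_add .., cfc_smul .., cfc_smul .., cfc_star .., cfc_id' ..]
  have hn : IsStarNormal (cfc (fun z : ℂ => 2 * Real.pi * (inner ℝ ξ z : ℝ) * I) N) := cfc_predicate _ N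
  rw [Eop, e, ← CFC.complex_exp_eq_normedSpace_exp, ← cfc_comp' ..]

end opexp

section gauss

lemma gauss_integrable {b : ℝ} (hb : 0 < b) :
    Integrable (fun v : ℂ => Real.exp (-b * ‖v‖ ^ 2)) := by
  have := (GaussianFourier.integrable_cexp_neg_mul_sq_norm_add (V := ℂ) (b := (b : ℂ))
    (by simpa using hb) 0 0).norm
  refine this.congr (Filter.Eventually.of_forall fun v => ?_)
  simp only [Complex.norm_exp]
  congr 1
  simp [← Complex.ofReal_pow]

lemma gauss_integral {b : ℝ} (hb : 0 < b) :
    ∫ v : ℂ, Real.exp (-b * ‖v‖ ^ 2) = Real.pi / b := by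
  have := GaussianFourier.integral_rexp_neg_mul_sq_norm (V := ℂ) hb
  rw [this]; simp [Complex.finrank_real_complex]

/-- square root of the heat kernel -/
noncomputable def gk (t : ℝ) (z : ℂ) : ℝ :=
  (Real.sqrt (Real.pi * t))⁻¹ * Real.exp (-(1 / (2 * t)) * ‖z‖ ^ 2)

/-- heat kernel -/
noncomputable def hk (t : ℝ) (z : ℂ) : ℝ :=
  (Real.pi * t)⁻¹ * Real.exp (-(1 / t) * ‖z‖ ^ 2)

/-- Fourier transform of `gk` -/
noncomputable def pk (t : ℝ) (z : ℂ) : ℝ :=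
  2 * Real.sqrt (Real.pi * t) * Real.exp (-(2 * Real.pi ^ 2 * t) * ‖z‖ ^ 2)

lemma gk_sq {t : ℝ} (ht : 0 < t) (z : ℂ) : gk t z * gk t z = hk t z := by
  unfold gk hk
  have h : Real.sqrt (Real.pi * t) * Real.sqrt (Real.pi * t) = Real.pi * t :=
    Real.mul_self_sqrt (by positivity)
  rw [mul_mul_mul_comm, ← mul_inv, h, ← Real.exp_add]
  congr 2; field_simp; ring

lemma gk_cont (t : ℝ) : Continuous (gk t) := by unfold gk; fun_prop
lemma hk_cont (t : ℝ) : Continuous (hk t) := by unfold hk; fun_prop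
lemma pk_cont (t : ℝ) : Continuous (pk t) := by unfold pk; fun_prop
lemma gk_nonneg {t : ℝ} (z : ℂ) : 0 ≤ gk t z := by unfold gk; positivity
lemma pk_nonneg {t : ℝ} (z : ℂ) : 0 ≤ pk t z := by unfold pk; positivity
lemma hk_nonneg {t : ℝ} (ht : 0 < t) (z : ℂ) : 0 ≤ hk t z := by
  unfold hk; positivity

lemma hk_integrable {t : ℝ} (ht : 0 < t) : Integrable (hk t) :=
  (gauss_integrable (by positivity)).const_mul _

lemma pk_integrable {t : ℝ} (ht : 0 < t) : Integrable (pk t) :=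
  (gauss_integrable (by positivity)).const_mul _

lemma hk_integral {t : ℝ} (ht : 0 < t) : ∫ z, hk t z = 1 := by
  unfold hk
  rw [integral_const_mul, gauss_integral (by positivity)]
  field_simp

lemma pk_sq_eq {t : ℝ} (ht : 0 < t) (z : ℂ) :
    pk t z ^ 2 = 4 * Real.pi * t * Real.exp (-(4 * Real.pi ^ 2 * t) * ‖z‖ ^ 2) := by
  unfold pk
  rw [mul_pow, mul_pow, Real.sq_sqrt (by positivity), ← Real.exp_nat_mul]
  congr 1
  · ring
  · congr 1; push_cast; ring

lemma pk_sq_integrable {t : ℝ} (ht : 0 < t) : Integrable (fun z => pk t z ^ 2) := by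
  simp_rw [pk_sq_eq ht]
  exact (gauss_integrable (by positivity)).const_mul _

lemma pk_sq_integral {t : ℝ} (ht : 0 < t) : ∫ z, pk t z ^ 2 = 1 := by
  simp_rw [pk_sq_eq ht]
  rw [integral_const_mul, gauss_integral (by positivity)]
  field_simp

lemma pk_sq_mul_le {t : ℝ} (ht : 0 < t) (z : ℂ) :
    pk t z ^ 2 * ‖z‖ ^ 2 ≤ 2 / Real.pi * Real.exp (-(2 * Real.pi ^ 2 * t) * ‖z‖ ^ 2) := by
  rw [pk_sq_eq ht]
  have h := Real.add_one_le_exp (2 * Real.pi ^ 2 * t * ‖z‖ ^ 2)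
  have h2 : Real.exp (-(4 * Real.pi ^ 2 * t) * ‖z‖ ^ 2) =
    Real.exp (-(2 * Real.pi ^ 2 * t) * ‖z‖ ^ 2) * (Real.exp (2 * Real.pi ^ 2 * t * ‖z‖ ^ 2))⁻¹ := by
    rw [← Real.exp_neg, ← Real.exp_add]; congr 1; ring
  rw [h2]
  set E := Real.exp (2 * Real.pi ^ 2 * t * ‖z‖ ^ 2)
  have hE : 0 < E := Real.exp_pos _
  have : 4 * Real.pi * t * ‖z‖ ^ 2 * E⁻¹ ≤ 2 / Real.pi := by
    rw [← div_eq_mul_inv, div_le_div_iff₀ hE Real.pi_pos]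
    nlinarith
  calc _ = (4 * Real.pi * t * ‖z‖ ^ 2 * E⁻¹) * Real.exp (-(2 * Real.pi ^ 2 * t) * ‖z‖ ^ 2) := by ring
    _ ≤ _ := by gcongr

lemma pk_fourier {t : ℝ} (ht : 0 < t) (w : ℂ) :
    𝓕 (fun z => (pk t z : ℂ)) w = (gk t w : ℂ) := by
  have hb : 0 < 2 * Real.pi ^ 2 * t := by positivity
  have := fourier_gaussian_innerProductSpace (V := ℂ) (b := ((2 * Real.pi ^ 2 * t : ℝ) : ℂ))
    (by rw [Complex.ofReal_re]; exact hb) w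
  have e : (fun z => (pk t z : ℂ)) = fun z : ℂ => ((2 * Real.sqrt (Real.pi * t) : ℝ) : ℂ) •
      cexp (-((2 * Real.pi ^ 2 * t : ℝ) : ℂ) * ‖z‖ ^ 2) := by
    funext z; unfold pk; push_cast; rw [smul_eq_mul]
  have e2 : 𝓕 (fun z => (pk t z : ℂ)) w = ((2 * Real.sqrt (Real.pi * t) : ℝ) : ℂ) •
      𝓕 (fun z : ℂ => cexp (-((2 * Real.pi ^ 2 * t : ℝ) : ℂ) * ‖z‖ ^ 2)) w := by
    rw [e, Real.fourier_eq, Real.fourier_eq, ← integral_smul]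
    congr 1; funext v; exact smul_comm _ _ _
  rw [e2, this, Complex.finrank_real_complex]
  have hs : Real.sqrt (Real.pi * t) ^ 2 = Real.pi * t := Real.sq_sqrt (by positivity)
  have hs0 : 0 < Real.sqrt (Real.pi * t) := Real.sqrt_pos.2 (by positivity)
  have c1 : (2 * Real.sqrt (Real.pi * t)) * (Real.pi / (2 * Real.pi ^ 2 * t)) =
      (Real.sqrt (Real.pi * t))⁻¹ := by
    have := Real.pi_pos
    field_simp
    rw [hs]
  unfold gk
  rw [← c1]
  have c2 : cexp (-(Real.pi : ℂ) ^ 2 * (‖w‖ : ℂ) ^ 2 / ((2 * Real.pi ^ 2 * t : ℝ) : ℂ)) =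
     ((Real.exp (-(1 / (2 * t)) * ‖w‖ ^ 2) : ℝ) : ℂ) := by
    rw [Complex.ofReal_exp]; congr 1
    rw [show -(1 / (2 * t)) * ‖w‖ ^ 2 = -(Real.pi) ^ 2 * ‖w‖ ^ 2 / (2 * Real.pi ^ 2 * t) by
      have := Real.pi_pos
      field_simp]
    push_cast; ring
  rw [c2]
  simp [mul_assoc]

lemma shift_bound {b : ℝ} (hb : 0 < b) {R : ℝ} (k z : ℂ) (hz : ‖z‖ ≤ R) :
    Real.exp (-b * ‖k - z‖ ^ 2) ≤ Real.exp (b * R ^ 2) * Real.exp (-(b / 2) * ‖k‖ ^ 2) := by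
  rw [← Real.exp_add]
  apply Real.exp_le_exp.2
  have h1 : ‖k‖ ≤ ‖k - z‖ + ‖z‖ := by simpa using norm_add_le (k - z) z
  have h2 : ‖k‖ ^ 2 ≤ 2 * ‖k - z‖ ^ 2 + 2 * R ^ 2 := by
    nlinarith [norm_nonneg k, norm_nonneg z, norm_nonneg (k - z), sq_nonneg (‖k - z‖ - ‖z‖)]
  nlinarith

end gauss

section planch
variable {H : Type*} [NormedAddCommGroup H] [InnerProductSpace ℂ H] [CompleteSpace H]

/-- `gk t (k - N)` -/
noncomputable def Gop (t : ℝ) (N : H →L[ℂ] H) (k : ℂ) : H →L[ℂ] H :=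
  cfc (fun z : ℂ => (gk t (k - z) : ℂ)) N

/-- Fourier side -/
noncomputable def Fop (t : ℝ) (N : H →L[ℂ] H) (u : H) (ξ : ℂ) : H :=
  (pk t ξ : ℂ) • Eop N ξ u

lemma Fop_cont (t : ℝ) (N : H →L[ℂ] H) (u : H) : Continuous (Fop t N u) := by
  unfold Fop
  have h1 := pk_cont t
  have h2 := Eop_cont N
  have h3 : Continuous fun ξ => Eop N ξ u := h2.clm_apply continuous_const
  exact (Complex.continuous_ofReal.comp h1).smul h3

lemma Fop_norm (t : ℝ) (N : H →L[ℂ] H) (u : H) (ξ : ℂ) : ‖Fop t N u ξ‖ = pk t ξ * ‖u‖ := by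
  rw [Fop, norm_smul, Eop_norm_apply, Complex.norm_real, Real.norm_of_nonneg (pk_nonneg _)]

lemma Fop_integrable {t : ℝ} (ht : 0 < t) (N : H →L[ℂ] H) (u : H) : Integrable (Fop t N u) := by
  refine ((pk_integrable ht).mul_const ‖u‖).mono' (Fop_cont t N u).aestronglyMeasurable ?_
  exact Filter.Eventually.of_forall fun ξ => (Fop_norm t N u ξ).le

lemma spec_bdd (N : H →L[ℂ] H) {z : ℂ} (hz : z ∈ spectrum ℂ N) : ‖z‖ ≤ ‖N‖ * ‖(1 : H →L[ℂ] H)‖ :=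
  spectrum.norm_le_norm_mul_of_mem hz

lemma Fop_fourier {t : ℝ} (ht : 0 < t) (N : H →L[ℂ] H) (hN : IsStarNormal N) (u : H) (k : ℂ) :
    𝓕 (Fop t N u) k = Gop t N k u := by
  have e : (fun z : ℂ => (gk t (k - z) : ℂ)) = fun z : ℂ => ∫ ξ : ℂ,
      (cexp (((-2 * Real.pi * inner ℝ ξ k : ℝ) : ℂ) * I) * (pk t ξ : ℂ)) •
        cexp (2 * Real.pi * (inner ℝ ξ z : ℝ) * I) := by
    funext z
    rw [← pk_fourier ht, Real.fourier_eq']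
    congr 1; funext ξ
    rw [smul_eq_mul, smul_eq_mul, mul_right_comm (cexp _) _ (cexp _), ← Complex.exp_add, inner_sub_right]
    congr 2
    push_cast; ring
  have hpc := pk_cont t
  have hc : Continuous (Function.uncurry fun (ξ z : ℂ) =>
      (cexp (((-2 * Real.pi * inner ℝ ξ k : ℝ) : ℂ) * I) * (pk t ξ : ℂ)) •
        cexp (2 * Real.pi * (inner ℝ ξ z : ℝ) * I)) := by
    unfold Function.uncurry
    fun_prop
  have hb : ∀ ξ z : ℂ, ‖(cexp (((-2 * Real.pi * inner ℝ ξ k : ℝ) : ℂ) * I) * (pk t ξ : ℂ)) •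
        cexp (2 * Real.pi * (inner ℝ ξ z : ℝ) * I)‖ ≤ pk t ξ := by
    intro ξ z
    have : (2 * Real.pi * (inner ℝ ξ z : ℝ) * I : ℂ) = ((2 * Real.pi * (inner ℝ ξ z : ℝ) : ℝ) : ℂ) * I := by
      push_cast; ring
    rw [norm_smul, norm_mul, this, Complex.norm_exp_ofReal_mul_I, Complex.norm_exp_ofReal_mul_I,
      Complex.norm_real, Real.norm_of_nonneg (pk_nonneg _)]
    simp
  have hint := integrable_cfc (μ := volume) (fun (ξ z : ℂ) =>
      (cexp (((-2 * Real.pi * inner ℝ ξ k : ℝ) : ℂ) * I) * (pk t ξ : ℂ)) •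
        cexp (2 * Real.pi * (inner ℝ ξ z : ℝ) * I)) (pk t) N hc.continuousOn
    (Filter.Eventually.of_forall fun ξ z _ => hb ξ z) (pk_integrable ht).hasFiniteIntegral
  rw [Gop, e, cfc_integral _ (pk t) N hc.continuousOn
    (Filter.Eventually.of_forall fun ξ z _ => hb ξ z) (pk_integrable ht).hasFiniteIntegral,
    ContinuousLinearMap.integral_apply hint, Real.fourier_eq']
  congr 1; funext ξ
  rw [cfc_smul .., ← Eop_eq_cfc N hN, Fop, smul_smul]
  rfl

lemma Gop_cont_apply {t : ℝ} (ht : 0 < t) (N : H →L[ℂ] H) (hN : IsStarNormal N) (u : H) :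
    Continuous fun k => Gop t N k u := by
  have := VectorFourier.fourierIntegral_continuous (μ := volume) Real.continuous_fourierChar
    (L := innerₗ ℂ) (by exact continuous_inner) (Fop_integrable ht N u)
  convert this using 1
  funext k
  rw [← Fop_fourier ht N hN]; rfl

lemma Gop_norm_le {t : ℝ} (ht : 0 < t) (N : H →L[ℂ] H) (hN : IsStarNormal N) :
    ∃ c : ℝ, 0 ≤ c ∧ ∀ k, ‖Gop t N k‖ ≤ c * Real.exp (-(1 / (2 * t) / 2) * ‖k‖ ^ 2) := by
  refine ⟨(Real.sqrt (Real.pi * t))⁻¹ *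
    Real.exp ((1 / (2 * t)) * (‖N‖ * ‖(1 : H →L[ℂ] H)‖) ^ 2), by positivity, fun k => ?_⟩
  refine norm_cfc_le (by positivity) fun z hz => ?_
  rw [Complex.norm_real, Real.norm_of_nonneg (gk_nonneg _), gk, mul_assoc]
  gcongr
  exact shift_bound (by positivity) k z (spec_bdd N hz)

lemma Gop_apply_integrable {t : ℝ} (ht : 0 < t) (N : H →L[ℂ] H) (hN : IsStarNormal N) (u : H) :
    Integrable fun k => Gop t N k u := by
  obtain ⟨c, hc, h⟩ := Gop_norm_le ht N hN
  refine (((gauss_integrable (b := (1 / (2 * t) / 2)) (by positivity)).const_mul c).mul_const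
    ‖u‖).mono' (Gop_cont_apply ht N hN u).aestronglyMeasurable ?_
  refine Filter.Eventually.of_forall fun k => ?_
  exact ((Gop t N k).le_opNorm u).trans (mul_le_mul_of_nonneg_right (h k) (norm_nonneg _))

lemma Gop_sq_integrable {t : ℝ} (ht : 0 < t) (N : H →L[ℂ] H) (hN : IsStarNormal N) (u : H) :
    Integrable fun k => ‖Gop t N k u‖ ^ 2 := by
  obtain ⟨c, hc, h⟩ := Gop_norm_le ht N hN
  have hi := (Gop_apply_integrable ht N hN u).norm.const_mul (c * ‖u‖)
  refine hi.mono' ((Gop_cont_apply ht N hN u).norm.pow 2).aestronglyMeasurable ?_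
  refine Filter.Eventually.of_forall fun k => ?_
  rw [Real.norm_of_nonneg (by positivity), sq]
  refine mul_le_mul_of_nonneg_right ?_ (norm_nonneg _)
  refine ((Gop t N k).le_opNorm u).trans (mul_le_mul_of_nonneg_right ((h k).trans ?_) (norm_nonneg _))
  have : Real.exp (-(1 / (2 * t) / 2) * ‖k‖ ^ 2) ≤ 1 := by
    rw [Real.exp_le_one_iff]
    have : 0 ≤ (1 / (2 * t) / 2) * ‖k‖ ^ 2 := by positivity
    linarith
  nlinarith

lemma plancherel_aux (F : ℂ → H) (hc : Continuous F) (hi : Integrable F)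
    (hi' : Integrable (𝓕 F)) : ∫ k, ‖𝓕 F k‖ ^ 2 = ∫ ξ, ‖F ξ‖ ^ 2 := by
  have h := VectorFourier.integral_sesq_fourierIntegral_eq_neg_flip (μ := volume) (ν := volume)
    (innerSL ℂ (E := H)) Real.continuous_fourierChar (L := innerₗ ℂ)
    (by exact continuous_inner) hi hi'
  have h2 : ∀ x, VectorFourier.fourierIntegral Real.fourierChar volume (-(innerₗ ℂ).flip) (𝓕 F) x
      = F x := by
    intro x
    have := congrFun (hc.fourierInv_fourier_eq hi hi') x
    rw [← this]
    simp only [Real.fourierInv_eq, VectorFourier.fourierIntegral]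
    congr 1; funext v
    simp 
  simp_rw [h2] at h
  have h3 : ∫ k, inner ℂ (𝓕 F k) (𝓕 F k) = ∫ ξ, inner ℂ (F ξ) (F ξ) := h
  simp_rw [inner_self_eq_norm_sq_to_K] at h3
  have h4 : ((∫ k, ‖𝓕 F k‖ ^ 2 : ℝ) : ℂ) = ((∫ ξ, ‖F ξ‖ ^ 2 : ℝ) : ℂ) := by
    rw [← integral_complex_ofReal, ← integral_complex_ofReal]
    simpa using h3
  exact_mod_cast h4

lemma Gop_sq_integral {t : ℝ} (ht : 0 < t) (N : H →L[ℂ] H) (hN : IsStarNormal N) (u : H) :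
    ∫ k, ‖Gop t N k u‖ ^ 2 = ‖u‖ ^ 2 := by
  have e : 𝓕 (Fop t N u) = fun k => Gop t N k u := funext fun k => Fop_fourier ht N hN u k
  have := plancherel_aux (Fop t N u) (Fop_cont t N u) (Fop_integrable ht N u)
    (by rw [e]; exact Gop_apply_integrable ht N hN u)
  rw [e] at this
  rw [this]
  simp_rw [Fop_norm, mul_pow]
  rw [integral_mul_const, pk_sq_integral ht, one_mul]

lemma Gop_diff_integral {t : ℝ} (ht : 0 < t) (N₁ N₂ : H →L[ℂ] H) (hN₁ : IsStarNormal N₁)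
    (hN₂ : IsStarNormal N₂) (u : H) :
    ∫ k, ‖Gop t N₁ k u - Gop t N₂ k u‖ ^ 2 ≤ (2 * ‖N₁ - N₂‖ / Real.sqrt t) ^ 2 * ‖u‖ ^ 2 := by
  have hi1 := Fop_integrable ht N₁ u
  have hi2 := Fop_integrable ht N₂ u
  have e : 𝓕 (fun ξ => Fop t N₁ u ξ - Fop t N₂ u ξ) = fun k => Gop t N₁ k u - Gop t N₂ k u := by
    funext k
    rw [← Fop_fourier ht N₁ hN₁, ← Fop_fourier ht N₂ hN₂]
    simp only [Real.fourier_eq, smul_sub]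
    rw [integral_sub]
    · exact (Real.fourierIntegral_convergent_iff k).2 hi1
    · exact (Real.fourierIntegral_convergent_iff k).2 hi2
  have := plancherel_aux (fun ξ => Fop t N₁ u ξ - Fop t N₂ u ξ)
    ((Fop_cont t N₁ u).sub (Fop_cont t N₂ u)) (hi1.sub hi2)
    (by rw [e]; exact (Gop_apply_integrable ht N₁ hN₁ u).sub (Gop_apply_integrable ht N₂ hN₂ u))
  rw [e] at this
  rw [this]
  have hp : ∀ ξ, ‖Fop t N₁ u ξ - Fop t N₂ u ξ‖ ^ 2 ≤
      ((2 * Real.pi * ‖N₁ - N₂‖ * ‖u‖) ^ 2 * (2 / Real.pi)) *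
        Real.exp (-(2 * Real.pi ^ 2 * t) * ‖ξ‖ ^ 2) := by
    intro ξ
    have h1 : ‖Fop t N₁ u ξ - Fop t N₂ u ξ‖ ≤ pk t ξ * (2 * Real.pi * ‖ξ‖ * ‖N₁ - N₂‖ * ‖u‖) := by
      rw [Fop, Fop, ← smul_sub, norm_smul, Complex.norm_real, Real.norm_of_nonneg (pk_nonneg _),
        ← sub_apply]
      gcongr
      · exact pk_nonneg _
      · exact ((Eop N₁ ξ - Eop N₂ ξ).le_opNorm u).trans
          (mul_le_mul_of_nonneg_right (Eop_sub N₁ N₂ ξ) (norm_nonneg _))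
    calc _ ≤ (pk t ξ * (2 * Real.pi * ‖ξ‖ * ‖N₁ - N₂‖ * ‖u‖)) ^ 2 := by gcongr
      _ = (2 * Real.pi * ‖N₁ - N₂‖ * ‖u‖) ^ 2 * (pk t ξ ^ 2 * ‖ξ‖ ^ 2) := by ring
      _ ≤ (2 * Real.pi * ‖N₁ - N₂‖ * ‖u‖) ^ 2 * (2 / Real.pi *
        Real.exp (-(2 * Real.pi ^ 2 * t) * ‖ξ‖ ^ 2)) := by
          exact mul_le_mul_of_nonneg_left (pk_sq_mul_le ht ξ) (by positivity)
      _ = _ := by ring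
  refine (integral_mono_of_nonneg (Filter.Eventually.of_forall fun ξ => by positivity)
    ((gauss_integrable (by positivity)).const_mul _) (Filter.Eventually.of_forall hp)).trans ?_
  rw [integral_const_mul, gauss_integral (by positivity)]
  have hs : Real.sqrt t ^ 2 = t := Real.sq_sqrt ht.le
  rw [div_pow, hs]
  have := Real.pi_pos
  apply le_of_eq
  field_simp

end planch

section key
variable {H : Type*} [NormedAddCommGroup H] [InnerProductSpace ℂ H] [CompleteSpace H]

/-- heat semigroup -/
noncomputable def heat (t : ℝ) (a : ℂ → ℂ) (z : ℂ) : ℂ := ∫ y, a (z - y) * (hk t y : ℂ)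

lemma heat_eq (t : ℝ) (a : ℂ → ℂ) (z : ℂ) : heat t a z = ∫ k, a k * (hk t (k - z) : ℂ) := by
  rw [heat, ← integral_sub_left_eq_self (fun k => a k * (hk t (k - z) : ℂ)) volume z]
  congr 1; funext y
  simp [hk]

lemma Gop_selfadj (t : ℝ) (N : H →L[ℂ] H) (k : ℂ) (x y : H) :
    inner ℂ x (Gop t N k y) = inner ℂ (Gop t N k x) y := by
  have : star (Gop t N k) = Gop t N k := by
    rw [Gop, ← cfc_star]
    congr 1; funext z; simp
  conv_rhs => rw [← this]
  rw [ContinuousLinearMap.star_eq_adjoint, ContinuousLinearMap.adjoint_inner_left]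

lemma heat_cfc {t : ℝ} (ht : 0 < t) (a : ℂ → ℂ) (ha : Continuous a) {M : ℝ}
    (hM : ∀ z, ‖a z‖ ≤ M) (N : H →L[ℂ] H) (hN : IsStarNormal N) (u v : H) :
    Integrable (fun k => a k * inner ℂ (Gop t N k v) (Gop t N k u)) ∧
    inner ℂ v (cfc (heat t a) N u) = ∫ k, a k * inner ℂ (Gop t N k v) (Gop t N k u) := by
  have hM0 : 0 ≤ M := (norm_nonneg _).trans (hM 0)
  have hkc := hk_cont t
  have hgc := gk_cont t
  have hc : Continuous (Function.uncurry fun (k z : ℂ) => a k • (hk t (k - z) : ℂ)) := by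
    unfold Function.uncurry; fun_prop
  set B : ℂ → ℝ := fun k => M * (Real.pi * t)⁻¹ *
    (Real.exp ((1 / t) * (‖N‖ * ‖(1 : H →L[ℂ] H)‖) ^ 2) * Real.exp (-(1 / t / 2) * ‖k‖ ^ 2)) with hB
  have hBi : Integrable B :=
    ((gauss_integrable (b := 1 / t / 2) (by positivity)).const_mul _).const_mul _
  have hb : ∀ k : ℂ, ∀ z ∈ spectrum ℂ N, ‖a k • (hk t (k - z) : ℂ)‖ ≤ B k := by
    intro k z hz
    rw [norm_smul, Complex.norm_real, Real.norm_of_nonneg (hk_nonneg ht _), hk, ← mul_assoc]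
    show _ ≤ M * (Real.pi * t)⁻¹ * _
    gcongr
    · exact hM k
    · exact shift_bound (by positivity) k z (spec_bdd N hz)
  have e : heat t a = fun z => ∫ k, a k • (hk t (k - z) : ℂ) := funext fun z => heat_eq t a z
  have hint := integrable_cfc (μ := volume) (fun (k z : ℂ) => a k • (hk t (k - z) : ℂ)) B N
    hc.continuousOn (Filter.Eventually.of_forall hb) hBi.hasFiniteIntegral
  have hp : ∀ k, cfc (fun z => a k • (hk t (k - z) : ℂ)) N = a k • (Gop t N k * Gop t N k) := by
    intro k
    rw [cfc_smul .., Gop, ← cfc_mul ..]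
    congr 2; funext z
    rw [← gk_sq ht]; push_cast; rfl
  have hip : ∀ k, inner ℂ v ((cfc (fun z => a k • (hk t (k - z) : ℂ)) N) u) =
      a k * inner ℂ (Gop t N k v) (Gop t N k u) := by
    intro k
    rw [hp, ← Gop_selfadj, ← inner_smul_right]; rfl
  have hi2 := hint.apply_continuousLinearMap u
  simp_rw [← hip]
  refine ⟨hi2.const_inner v, ?_⟩
  rw [e, cfc_integral _ B N hc.continuousOn (Filter.Eventually.of_forall hb)
    hBi.hasFiniteIntegral, ContinuousLinearMap.integral_apply hint, integral_inner hi2]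

lemma key {t : ℝ} (ht : 0 < t) (a : ℂ → ℂ) (ha : Continuous a) {M : ℝ}
    (hM : ∀ z, ‖a z‖ ≤ M) (N₁ N₂ : H →L[ℂ] H) (hN₁ : IsStarNormal N₁) (hN₂ : IsStarNormal N₂)
    (hne : N₁ ≠ N₂) :
    ‖cfc (heat t a) N₁ - cfc (heat t a) N₂‖ ≤ 4 * M * ‖N₁ - N₂‖ / Real.sqrt t := by
  have hM0 : 0 ≤ M := (norm_nonneg _).trans (hM 0)
  set S := 2 * ‖N₁ - N₂‖ / Real.sqrt t with hS
  have hS0 : 0 < S := by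
    have := norm_pos_iff.2 (sub_ne_zero.2 hne)
    have := Real.sqrt_pos.2 ht
    positivity
  set T := cfc (heat t a) N₁ - cfc (heat t a) N₂ with hT
  have main : ∀ u v : H, ‖inner ℂ v (T u)‖ ≤ M * S * (‖u‖ ^ 2 + ‖v‖ ^ 2) := by
    intro u v
    obtain ⟨i1, e1⟩ := heat_cfc ht a ha hM N₁ hN₁ u v
    obtain ⟨i2, e2⟩ := heat_cfc ht a ha hM N₂ hN₂ u v
    rw [hT, sub_apply, inner_sub_right, e1, e2, ← integral_sub i1 i2]
    have sqd : ∀ w : H, Integrable fun k => ‖Gop t N₁ k w - Gop t N₂ k w‖ ^ 2 := by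
      intro w
      have := ((Gop_sq_integrable ht N₁ hN₁ w).const_mul 2).add
        ((Gop_sq_integrable ht N₂ hN₂ w).const_mul 2)
      refine this.mono' (((Gop_cont_apply ht N₁ hN₁ w).sub
        (Gop_cont_apply ht N₂ hN₂ w)).norm.pow 2).aestronglyMeasurable ?_
      refine Filter.Eventually.of_forall fun k => ?_
      rw [Real.norm_of_nonneg (by positivity)]
      have := norm_sub_le (Gop t N₁ k w) (Gop t N₂ k w)
      show _ ≤ 2 * ‖Gop t N₁ k w‖ ^ 2 + 2 * ‖Gop t N₂ k w‖ ^ 2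
      nlinarith [norm_nonneg (Gop t N₁ k w - Gop t N₂ k w), norm_nonneg (Gop t N₁ k w),
        norm_nonneg (Gop t N₂ k w), sq_nonneg (‖Gop t N₁ k w‖ - ‖Gop t N₂ k w‖)]
    have amgm : ∀ x y : ℝ, x * y ≤ (S * x ^ 2 + S⁻¹ * y ^ 2) / 2 := by
      intro x y
      have : 0 ≤ S⁻¹ * (S * x - y) ^ 2 := by positivity
      have h2 : S⁻¹ * (S * x - y) ^ 2 = S * x ^ 2 + S⁻¹ * y ^ 2 - 2 * (x * y) := by
        field_simp; ring
      linarith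
    have bd : ∀ k, ‖a k * inner ℂ (Gop t N₁ k v) (Gop t N₁ k u) -
        a k * inner ℂ (Gop t N₂ k v) (Gop t N₂ k u)‖ ≤
        M / 2 * ((S * ‖Gop t N₁ k v‖ ^ 2 + S⁻¹ * ‖Gop t N₁ k u - Gop t N₂ k u‖ ^ 2) +
          (S * ‖Gop t N₂ k u‖ ^ 2 + S⁻¹ * ‖Gop t N₁ k v - Gop t N₂ k v‖ ^ 2)) := by
      intro k
      have e : a k * inner ℂ (Gop t N₁ k v) (Gop t N₁ k u) -
        a k * inner ℂ (Gop t N₂ k v) (Gop t N₂ k u) =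
        a k * (inner ℂ (Gop t N₁ k v) (Gop t N₁ k u - Gop t N₂ k u) +
          inner ℂ (Gop t N₁ k v - Gop t N₂ k v) (Gop t N₂ k u)) := by
        rw [inner_sub_right, inner_sub_left]; ring
      rw [e, norm_mul]
      have h1 := norm_add_le (inner ℂ (Gop t N₁ k v) (Gop t N₁ k u - Gop t N₂ k u))
        (inner ℂ (Gop t N₁ k v - Gop t N₂ k v) (Gop t N₂ k u))
      have h2 := norm_inner_le_norm (𝕜 := ℂ) (Gop t N₁ k v) (Gop t N₁ k u - Gop t N₂ k u)
      have h3 := norm_inner_le_norm (𝕜 := ℂ) (Gop t N₁ k v - Gop t N₂ k v) (Gop t N₂ k u)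
      have h4 := amgm ‖Gop t N₁ k v‖ ‖Gop t N₁ k u - Gop t N₂ k u‖
      have h5 := amgm ‖Gop t N₂ k u‖ ‖Gop t N₁ k v - Gop t N₂ k v‖
      refine (mul_le_mul (hM k) (h1.trans (add_le_add (h2.trans h4)
        (h3.trans ((mul_comm _ _).le.trans h5)))) (norm_nonneg _) hM0).trans ?_
      apply le_of_eq; ring
    have j1 := (Gop_sq_integrable ht N₁ hN₁ v).const_mul S
    have j2 := (sqd u).const_mul S⁻¹
    have j3 := (Gop_sq_integrable ht N₂ hN₂ u).const_mul S
    have j4 := (sqd v).const_mul S⁻¹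
    refine (norm_integral_le_of_norm_le (((j1.add j2).add (j3.add j4)).const_mul (M / 2))
      (Filter.Eventually.of_forall bd)).trans ?_
    rw [integral_const_mul]
    have s1 : ∫ k, ((S * ‖Gop t N₁ k v‖ ^ 2 + S⁻¹ * ‖Gop t N₁ k u - Gop t N₂ k u‖ ^ 2) +
          (S * ‖Gop t N₂ k u‖ ^ 2 + S⁻¹ * ‖Gop t N₁ k v - Gop t N₂ k v‖ ^ 2)) ≤
        2 * S * (‖u‖ ^ 2 + ‖v‖ ^ 2) := by
      have j12 : Integrable fun k => S * ‖Gop t N₁ k v‖ ^ 2 +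
        S⁻¹ * ‖Gop t N₁ k u - Gop t N₂ k u‖ ^ 2 := j1.add j2
      have j34 : Integrable fun k => S * ‖Gop t N₂ k u‖ ^ 2 +
        S⁻¹ * ‖Gop t N₁ k v - Gop t N₂ k v‖ ^ 2 := j3.add j4
      rw [integral_add j12 j34, integral_add j1 j2, integral_add j3 j4,
        integral_const_mul, integral_const_mul, integral_const_mul, integral_const_mul,
        Gop_sq_integral ht N₁ hN₁, Gop_sq_integral ht N₂ hN₂]
      have d1 := mul_le_mul_of_nonneg_left (Gop_diff_integral ht N₁ N₂ hN₁ hN₂ u) (inv_pos.2 hS0).le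
      have d2 := mul_le_mul_of_nonneg_left (Gop_diff_integral ht N₁ N₂ hN₁ hN₂ v) (inv_pos.2 hS0).le
      rw [← hS] at d1 d2
      have r : ∀ x : ℝ, S⁻¹ * (S ^ 2 * x) = S * x := fun x => by field_simp
      rw [r] at d1 d2
      linarith
    refine (mul_le_mul_of_nonneg_left s1 (by positivity)).trans ?_
    apply le_of_eq; ring
  have fin : ‖T‖ ≤ 2 * M * S := by
    refine T.opNorm_le_bound (by positivity) fun u => ?_
    by_cases hTu : T u = 0
    · rw [hTu, norm_zero]; positivity
    have hTp := norm_pos_iff.2 hTu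
    have hu : u ≠ 0 := by rintro rfl; simp at hTu
    have hup := norm_pos_iff.2 hu
    have := main u (((‖u‖ / ‖T u‖ : ℝ) : ℂ) • T u)
    rw [inner_smul_left, norm_mul, norm_smul, RCLike.norm_conj, Complex.norm_real,
      Real.norm_of_nonneg (by positivity), div_mul_cancel₀ _ hTp.ne', inner_self_eq_norm_sq_to_K,
      norm_pow] at this
    simp only [Complex.coe_algebraMap, Complex.norm_real, norm_norm] at this
    have e : ‖u‖ / ‖T u‖ * ‖T u‖ ^ 2 = ‖u‖ * ‖T u‖ := by field_simp
    rw [e] at this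
    have h2 : ‖u‖ * ‖T u‖ ≤ ‖u‖ * (2 * M * S * ‖u‖) := this.trans (le_of_eq (by ring))
    exact le_of_mul_le_mul_left h2 hup
  refine fin.trans (le_of_eq ?_)
  rw [hS]; ring

end key

section semigroup

/-- bounded continuous Hölder functions -/
structure GoodFn (α C M : ℝ) (a : ℂ → ℂ) : Prop where
  cont : Continuous a
  bdd : ∀ z, ‖a z‖ ≤ M
  hol : ∀ z w, ‖a z - a w‖ ≤ C * ‖z - w‖ ^ α

lemma heat_integrable {t : ℝ} (ht : 0 < t) {a : ℂ → ℂ} (ha : Continuous a) {M : ℝ}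
    (hM : ∀ z, ‖a z‖ ≤ M) (z : ℂ) : Integrable fun y => a (z - y) * (hk t y : ℂ) := by
  have hkc := hk_cont t
  refine ((hk_integrable ht).const_mul M).mono' (by fun_prop) ?_
  refine Filter.Eventually.of_forall fun y => ?_
  rw [norm_mul, Complex.norm_real, Real.norm_of_nonneg (hk_nonneg ht _)]
  exact mul_le_mul_of_nonneg_right (hM _) (hk_nonneg ht _)

lemma heat_norm_le {t : ℝ} (ht : 0 < t) {a : ℂ → ℂ} {M : ℝ}
    (hM : ∀ z, ‖a z‖ ≤ M) (z : ℂ) : ‖heat t a z‖ ≤ M := by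
  rw [heat]
  refine (norm_integral_le_of_norm_le ((hk_integrable ht).const_mul M) ?_).trans ?_
  · refine Filter.Eventually.of_forall fun y => ?_
    rw [norm_mul, Complex.norm_real, Real.norm_of_nonneg (hk_nonneg ht _)]
    exact mul_le_mul_of_nonneg_right (hM _) (hk_nonneg ht _)
  · rw [integral_const_mul, hk_integral ht, mul_one]

lemma heat_cont {t : ℝ} (ht : 0 < t) {a : ℂ → ℂ} (ha : Continuous a) {M : ℝ}
    (hM : ∀ z, ‖a z‖ ≤ M) : Continuous (heat t a) := by
  have hkc := hk_cont t
  refine continuous_of_dominated (bound := fun y => M * hk t y) (fun z => by fun_prop) (fun z => ?_)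
    ((hk_integrable ht).const_mul M) (Filter.Eventually.of_forall fun y => by fun_prop)
  refine Filter.Eventually.of_forall fun y => ?_
  rw [norm_mul, Complex.norm_real, Real.norm_of_nonneg (hk_nonneg ht _)]
  exact mul_le_mul_of_nonneg_right (hM _) (hk_nonneg ht _)

lemma heat_sub {t : ℝ} (ht : 0 < t) {a b : ℂ → ℂ} (ha : Continuous a) (hb : Continuous b) {M M' : ℝ}
    (hM : ∀ z, ‖a z‖ ≤ M) (hM' : ∀ z, ‖b z‖ ≤ M') (z : ℂ) :
    heat t (fun w => a w - b w) z = heat t a z - heat t b z := by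
  rw [heat, heat, heat, ← integral_sub (heat_integrable ht ha hM z) (heat_integrable ht hb hM' z)]
  congr 1; funext y; ring

lemma heat_good {t : ℝ} (ht : 0 < t) {α C M : ℝ} {a : ℂ → ℂ} (h : GoodFn α C M a) :
    GoodFn α C M (heat t a) := by
  refine ⟨heat_cont ht h.cont h.bdd, heat_norm_le ht h.bdd, fun z w => ?_⟩
  rw [heat, heat, ← integral_sub (heat_integrable ht h.cont h.bdd z)
    (heat_integrable ht h.cont h.bdd w)]
  refine (norm_integral_le_of_norm_le ((hk_integrable ht).const_mul (C * ‖z - w‖ ^ α)) ?_).trans ?_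
  · refine Filter.Eventually.of_forall fun y => ?_
    rw [← sub_mul, norm_mul, Complex.norm_real, Real.norm_of_nonneg (hk_nonneg ht _)]
    refine mul_le_mul_of_nonneg_right ?_ (hk_nonneg ht _)
    simpa using h.hol (z - y) (w - y)
  · rw [integral_const_mul, hk_integral ht, mul_one]

lemma heat_comm {s t : ℝ} (hs : 0 < s) (ht : 0 < t) {a : ℂ → ℂ} (ha : Continuous a) {M : ℝ}
    (hM : ∀ z, ‖a z‖ ≤ M) (z : ℂ) : heat s (heat t a) z = heat t (heat s a) z := by
  have e : ∀ s t : ℝ, heat s (heat t a) z =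
      ∫ y, ∫ x, a (z - y - x) * ((hk t x : ℂ) * (hk s y : ℂ)) := by
    intro s t
    simp only [heat]
    congr 1; funext y
    rw [← integral_mul_const]
    congr 1; funext x; ring
  rw [e, e, integral_integral_swap]
  · congr 1; funext x; congr 1; funext y
    rw [sub_right_comm, mul_comm (hk t x : ℂ)]
  · have h1 := hk_cont s
    have h2 := hk_cont t
    have hi := (((hk_integrable hs).mul_prod (hk_integrable ht)).const_mul M)
    refine hi.mono' ?_ ?_
    · apply Continuous.aestronglyMeasurable
      unfold Function.uncurry
      fun_prop
    · refine Filter.Eventually.of_forall fun p => ?_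
      simp only [Function.uncurry]
      rw [norm_mul, norm_mul, Complex.norm_real, Complex.norm_real,
        Real.norm_of_nonneg (hk_nonneg ht _), Real.norm_of_nonneg (hk_nonneg hs _),
        mul_comm (hk t p.2)]
      exact mul_le_mul_of_nonneg_right (hM _) (mul_nonneg (hk_nonneg hs _) (hk_nonneg ht _))

lemma rpow_aux {α : ℝ} (h0 : 0 < α) (h1 : α < 1) {x : ℝ} (hx : 0 ≤ x) :
    x ^ α ≤ 2 * Real.exp (x ^ 2 / 2) := by
  have h2 := Real.add_one_le_exp (x ^ 2 / 2)
  have h3 : x ^ α ≤ 1 + x ^ 2 := by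
    rcases le_total x 1 with h | h
    · have := Real.rpow_le_one hx h h0.le
      nlinarith
    · have := Real.rpow_le_rpow_of_exponent_le h (show α ≤ (2 : ℝ) by linarith)
      rw [Real.rpow_two] at this
      linarith
  linarith

lemma heat_sub_self {s : ℝ} (hs : 0 < s) {α C M : ℝ} (h0 : 0 < α) (h1 : α < 1) (hC : 0 ≤ C)
    {a : ℂ → ℂ} (h : GoodFn α C M a) (z : ℂ) :
    ‖a z - heat (s ^ 2) a z‖ ≤ 4 * C * s ^ α := by
  have ht : 0 < s ^ 2 := by positivity
  have e : a z = ∫ y, a z * (hk (s ^ 2) y : ℂ) := by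
    rw [integral_const_mul, integral_complex_ofReal, hk_integral ht]; simp
  have hi : Integrable fun y => a z * (hk (s ^ 2) y : ℂ) := (hk_integrable ht).ofReal.const_mul _
  rw [heat]
  nth_rewrite 1 [e]
  rw [← integral_sub hi (heat_integrable ht h.cont h.bdd z)]
  refine (norm_integral_le_of_norm_le ((gauss_integrable (b := 1 / (2 * s ^ 2))
    (by positivity)).const_mul (2 * C * s ^ α * (Real.pi * s ^ 2)⁻¹)) ?_).trans ?_
  · refine Filter.Eventually.of_forall fun y => ?_
    rw [← sub_mul, norm_mul, Complex.norm_real, Real.norm_of_nonneg (hk_nonneg ht _)]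
    have b1 : ‖a z - a (z - y)‖ ≤ C * ‖y‖ ^ α := by simpa using h.hol z (z - y)
    have b2 : ‖y‖ ^ α ≤ s ^ α * (2 * Real.exp ((‖y‖ / s) ^ 2 / 2)) := by
      have := rpow_aux h0 h1 (x := ‖y‖ / s) (by positivity)
      rw [Real.div_rpow (norm_nonneg _) hs.le, div_le_iff₀ (by positivity)] at this
      linarith
    have b3 : ‖a z - a (z - y)‖ ≤ C * (s ^ α * (2 * Real.exp ((‖y‖ / s) ^ 2 / 2))) :=
      b1.trans (mul_le_mul_of_nonneg_left b2 hC)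
    refine (mul_le_mul_of_nonneg_right b3 (hk_nonneg ht _)).trans (le_of_eq ?_)
    have b4 : Real.exp (-(1 / (2 * s ^ 2)) * ‖y‖ ^ 2) =
        Real.exp ((‖y‖ / s) ^ 2 / 2) * Real.exp (-(1 / s ^ 2) * ‖y‖ ^ 2) := by
      rw [← Real.exp_add]; congr 1; field_simp; ring
    rw [b4, hk]; ring
  · rw [integral_const_mul, gauss_integral (by positivity)]
    apply le_of_eq
    have := Real.pi_pos
    field_simp
    ring

end semigroup

section final
variable {H : Type*} [NormedAddCommGroup H] [InnerProductSpace ℂ H] [CompleteSpace H]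

/-- iterated smoothing -/
noncomputable def fs (f : ℂ → ℂ) (δ : ℝ) : ℕ → ℂ → ℂ
  | 0 => f
  | n + 1 => heat ((2 ^ n * δ) ^ 2) (fs f δ n)

lemma fs_good {f : ℂ → ℂ} {δ α C M : ℝ} (hδ : 0 < δ) (h : GoodFn α C M f) (n : ℕ) :
    GoodFn α C M (fs f δ n) := by
  induction n with
  | zero => exact h
  | succ n ih => exact heat_good (by positivity) ih

lemma bounded_case {α C M : ℝ} (h0 : 0 < α) (h1 : α < 1) (hC : 0 ≤ C) {f : ℂ → ℂ}
    (h : GoodFn α C M f) (N₁ N₂ : H →L[ℂ] H) (hN₁ : IsStarNormal N₁) (hN₂ : IsStarNormal N₂)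
    (hne : N₁ ≠ N₂) :
    ‖cfc f N₁ - cfc f N₂‖ ≤
      (8 + 16 * 2 ^ α / (1 - 2 ^ α / 2)) * C * ‖N₁ - N₂‖ ^ α := by
  set δ := ‖N₁ - N₂‖ with hδ
  have hδ0 : 0 < δ := norm_pos_iff.2 (sub_ne_zero.2 hne)
  have good := fs_good hδ0 h
  have hM0 : 0 ≤ M := (norm_nonneg _).trans (h.bdd 0)
  set Δ : (ℂ → ℂ) → (H →L[ℂ] H) := fun g => cfc g N₁ - cfc g N₂ with hΔ
  have Δsub : ∀ g₁ g₂ : ℂ → ℂ, Continuous g₁ → Continuous g₂ →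
      Δ (fun z => g₁ z - g₂ z) = Δ g₁ - Δ g₂ := by
    intro g₁ g₂ c1 c2
    simp only [hΔ]
    rw [cfc_sub g₁ g₂ N₁ c1.continuousOn c2.continuousOn,
      cfc_sub g₁ g₂ N₂ c1.continuousOn c2.continuousOn]
    abel
  have first : ‖Δ f‖ ≤ 8 * C * δ ^ α + ‖Δ (fs f δ 1)‖ := by
    have hb : ∀ z, ‖f z - fs f δ 1 z‖ ≤ 4 * C * δ ^ α := by
      intro z
      have := heat_sub_self hδ0 h0 h1 hC h z
      simpa [fs] using this
    have e := Δsub f (fs f δ 1) h.cont (good 1).cont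
    have n1 : ‖Δ (fun z => f z - fs f δ 1 z)‖ ≤ 8 * C * δ ^ α := by
      refine (norm_sub_le _ _).trans ?_
      have a1 := norm_cfc_le (a := N₁) (f := fun z => f z - fs f δ 1 z)
        (by positivity : 0 ≤ 4 * C * δ ^ α) (fun z _ => hb z)
      have a2 := norm_cfc_le (a := N₂) (f := fun z => f z - fs f δ 1 z)
        (by positivity : 0 ≤ 4 * C * δ ^ α) (fun z _ => hb z)
      linarith
    have : Δ f = Δ (fun z => f z - fs f δ 1 z) + Δ (fs f δ 1) := by rw [e]; abel
    rw [this]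
    exact (norm_add_le _ _).trans (by linarith)
  set r : ℝ := 2 ^ α / 2 with hr
  have hr0 : 0 ≤ r := by positivity
  have hr1 : r < 1 := by
    have : (2 : ℝ) ^ α < 2 ^ (1 : ℝ) := Real.rpow_lt_rpow_of_exponent_lt (by norm_num) h1
    rw [Real.rpow_one] at this
    rw [hr]; linarith
  set A : ℝ := 16 * C * 2 ^ α * δ ^ α with hA
  have hA0 : 0 ≤ A := by positivity
  have step : ∀ n, ‖Δ (fs f δ (n + 1))‖ ≤ A * r ^ n + ‖Δ (fs f δ (n + 2))‖ := by
    intro n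
    have t1 : 0 < 2 ^ n * δ := by positivity
    have t2 : 0 < 2 ^ (n + 1) * δ := by positivity
    have hc2 := heat_good (t := (2 ^ (n + 1) * δ) ^ 2) (by positivity) (good n)
    have e0 : (fun z => fs f δ (n + 1) z - fs f δ (n + 2) z) =
        heat ((2 ^ n * δ) ^ 2) (fun z => fs f δ n z - heat ((2 ^ (n + 1) * δ) ^ 2) (fs f δ n) z) := by
      funext z
      rw [heat_sub (by positivity) (good n).cont hc2.cont (good n).bdd hc2.bdd,
        heat_comm (by positivity) (by positivity) (good n).cont (good n).bdd]
      rfl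
    have k := key (t := (2 ^ n * δ) ^ 2) (by positivity)
      (fun z => fs f δ n z - heat ((2 ^ (n + 1) * δ) ^ 2) (fs f δ n) z)
      ((good n).cont.sub hc2.cont) (fun z => heat_sub_self t2 h0 h1 hC (good n) z) N₁ N₂ hN₁ hN₂ hne
    rw [← e0, ← hδ, Real.sqrt_sq t1.le] at k
    have k2 : 4 * (4 * C * (2 ^ (n + 1) * δ) ^ α) * δ / (2 ^ n * δ) = A * r ^ n := by
      rw [Real.mul_rpow (by positivity) hδ0.le, ← Real.rpow_natCast_mul (by norm_num), mul_comm _ α,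
        Real.rpow_mul_natCast (by norm_num), hA, hr, div_pow, pow_succ]
      field_simp
      ring
    rw [k2] at k
    have e := Δsub (fs f δ (n + 1)) (fs f δ (n + 2)) (good _).cont (good _).cont
    have : Δ (fs f δ (n + 1)) = Δ (fun z => fs f δ (n + 1) z - fs f δ (n + 2) z)
      + Δ (fs f δ (n + 2)) := by rw [e]; abel
    rw [this]
    exact (norm_add_le _ _).trans (by gcongr)
  have tele : ∀ m, ‖Δ (fs f δ 1)‖ ≤ ∑ n ∈ Finset.range m, A * r ^ n + ‖Δ (fs f δ (m + 1))‖ := by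
    intro m
    induction m with
    | zero => simp
    | succ m ih =>
      rw [Finset.sum_range_succ]
      have := step m
      linarith
  have geo : ∀ m, ∑ n ∈ Finset.range m, A * r ^ n ≤ A / (1 - r) := by
    intro m
    rw [← Finset.mul_sum, div_eq_mul_inv]
    refine mul_le_mul_of_nonneg_left ?_ hA0
    rw [← tsum_geometric_of_lt_one hr0 hr1]
    exact (summable_geometric_of_lt_one hr0 hr1).sum_le_tsum _ (fun _ _ => by positivity)
  have tail : ∀ m : ℕ, ‖Δ (fs f δ (m + 1))‖ ≤ 4 * M * (1 / 2) ^ m := by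
    intro m
    have t1 : 0 < 2 ^ m * δ := by positivity
    have k := key (t := (2 ^ m * δ) ^ 2) (by positivity) (fs f δ m) (good m).cont (good m).bdd
      N₁ N₂ hN₁ hN₂ hne
    rw [← hδ, Real.sqrt_sq t1.le] at k
    refine k.trans (le_of_eq ?_)
    rw [div_pow, one_pow]
    field_simp
  have lim : ‖Δ (fs f δ 1)‖ ≤ A / (1 - r) := by
    have ht : Filter.Tendsto (fun m : ℕ => A / (1 - r) + 4 * M * (1 / 2 : ℝ) ^ m) Filter.atTop
        (nhds (A / (1 - r) + 4 * M * 0)) :=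
      ((tendsto_pow_atTop_nhds_zero_of_lt_one (by norm_num) (by norm_num)).const_mul _).const_add _
    rw [mul_zero, add_zero] at ht
    refine ge_of_tendsto' ht fun m => ?_
    have := tele m
    have := geo m
    have := tail m
    linarith
  have fin : ‖Δ f‖ ≤ 8 * C * δ ^ α + A / (1 - r) := by linarith
  refine fin.trans (le_of_eq ?_)
  rw [hA]; ring

/-- clamp on the complex plane -/
noncomputable def clampC (R : ℝ) (w : ℂ) : ℂ := ⟨max (-R) (min R w.re), max (-R) (min R w.im)⟩

lemma clamp_lip (R a b : ℝ) : |max (-R) (min R a) - max (-R) (min R b)| ≤ |a - b| := by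
  have h1 := abs_max_sub_max_le_abs (min R a) (min R b) (-R)
  have h2 := abs_min_sub_min_le_max R a R b
  rw [max_comm (-R), max_comm (-R)]
  refine h1.trans (h2.trans ?_)
  simp

lemma clampC_lip (R : ℝ) (w w' : ℂ) : ‖clampC R w - clampC R w'‖ ≤ ‖w - w'‖ := by
  rw [← sq_le_sq₀ (norm_nonneg _) (norm_nonneg _), Complex.sq_norm, Complex.sq_norm,
    Complex.normSq_apply, Complex.normSq_apply]
  have h1 := sq_le_sq.2 (clamp_lip R w.re w'.re)
  have h2 := sq_le_sq.2 (clamp_lip R w.im w'.im)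
  simp only [clampC, Complex.sub_re, Complex.sub_im]
  nlinarith

lemma clampC_bdd {R : ℝ} (hR : 0 ≤ R) (w : ℂ) : ‖clampC R w‖ ≤ R + R := by
  refine (Complex.norm_le_abs_re_add_abs_im _).trans (add_le_add ?_ ?_)
  · exact abs_le.2 ⟨le_max_left _ _, max_le (by linarith) (min_le_left _ _)⟩
  · exact abs_le.2 ⟨le_max_left _ _, max_le (by linarith) (min_le_left _ _)⟩

lemma clampC_eq {R : ℝ} {w : ℂ} (hw : ‖w‖ ≤ R) : clampC R w = w := by
  have h1 := abs_le.1 ((Complex.abs_re_le_norm w).trans hw)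
  have h2 := abs_le.1 ((Complex.abs_im_le_norm w).trans hw)
  apply Complex.ext
  · simp [clampC, h1.1, h1.2]
  · simp [clampC, h2.1, h2.2]

end final

/-- Aleksandrov–Peller–Potapov–Sukochev: every Hölder function of order `α ∈ (0,1)` on
the plane is operator Hölder of order `α` for normal operators: there is `c = c(α) > 0`
such that if `‖f(z) − f(w)‖ ≤ C·|z − w|^α` for all `z, w ∈ ℂ`, then for all bounded
normal operators `N₁, N₂`, `‖f(N₁) − f(N₂)‖ ≤ c·C·‖N₁ − N₂‖^α`. -/
theorem normal_operator_holder
    (α : ℝ) (hα0 : 0 < α) (hα1 : α < 1) :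
    ∃ c : ℝ, 0 < c ∧
      ∀ (H : Type*) [NormedAddCommGroup H] [InnerProductSpace ℂ H] [CompleteSpace H],
      ∀ (f : ℂ → ℂ) (C : ℝ), (∀ z w : ℂ, ‖f z - f w‖ ≤ C * ‖z - w‖ ^ α) →
      ∀ (N₁ N₂ : H →L[ℂ] H), IsStarNormal N₁ → IsStarNormal N₂ →
        ‖cfc f N₁ - cfc f N₂‖ ≤ c * C * ‖N₁ - N₂‖ ^ α := by
  have hr1 : 0 < 1 - (2 : ℝ) ^ α / 2 := by
    have : (2 : ℝ) ^ α < 2 ^ (1 : ℝ) := Real.rpow_lt_rpow_of_exponent_lt (by norm_num) hα1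
    rw [Real.rpow_one] at this
    linarith
  refine ⟨8 + 16 * 2 ^ α / (1 - 2 ^ α / 2), by positivity, ?_⟩
  intro H _ _ _ f C hf N₁ N₂ hN₁ hN₂
  have hC : 0 ≤ C := by
    have := (norm_nonneg _).trans (hf 1 0)
    simpa using this
  by_cases hne : N₁ = N₂
  · subst hne
    rw [sub_self, norm_zero]; positivity
  have hfc : Continuous f := by
    rw [continuous_iff_continuousAt]
    intro w
    rw [ContinuousAt, tendsto_iff_norm_sub_tendsto_zero]
    have hc : Continuous fun z : ℂ => C * ‖z - w‖ ^ α :=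
      continuous_const.mul ((continuous_id.sub continuous_const).norm.rpow_const
        fun _ => Or.inr hα0.le)
    have := hc.tendsto w
    rw [sub_self, norm_zero, Real.zero_rpow hα0.ne', mul_zero] at this
    exact squeeze_zero (fun _ => norm_nonneg _) (fun z => hf z w) this
  set ρ := max (‖N₁‖ * ‖(1 : H →L[ℂ] H)‖) (‖N₂‖ * ‖(1 : H →L[ℂ] H)‖) with hρ
  set R := ‖f 0‖ + C * ρ ^ α with hR
  have hρ0 : 0 ≤ ρ := le_max_of_le_left (by positivity)
  have hR0 : 0 ≤ R := by positivity
  have hle : ∀ z : ℂ, ‖z‖ ≤ ρ → ‖f z‖ ≤ R := by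
    intro z hz
    have h1 := hf z 0
    rw [sub_zero] at h1
    have h2 : ‖f z‖ ≤ ‖f 0‖ + ‖f z - f 0‖ := by simpa using norm_add_le (f 0) (f z - f 0)
    have h3 : ‖z‖ ^ α ≤ ρ ^ α := Real.rpow_le_rpow (norm_nonneg _) hz hα0.le
    have h4 := mul_le_mul_of_nonneg_left h3 hC
    linarith
  have hol : ∀ z w, ‖clampC R (f z) - clampC R (f w)‖ ≤ C * ‖z - w‖ ^ α :=
    fun z w => (clampC_lip _ _ _).trans (hf z w)
  have good : GoodFn α C (R + R) (fun z => clampC R (f z)) := by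
    refine ⟨?_, fun z => clampC_bdd hR0 _, hol⟩
    have : LipschitzWith 1 (clampC R) := LipschitzWith.of_dist_le_mul fun x y => by
      simpa [dist_eq_norm] using clampC_lip R x y
    exact this.continuous.comp hfc
  have e1 : cfc f N₁ = cfc (fun z => clampC R (f z)) N₁ := cfc_congr fun z hz =>
    (clampC_eq (hle z ((spec_bdd N₁ hz).trans (le_max_left _ _)))).symm
  have e2 : cfc f N₂ = cfc (fun z => clampC R (f z)) N₂ := cfc_congr fun z hz =>
    (clampC_eq (hle z ((spec_bdd N₂ hz).trans (le_max_right _ _)))).symm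
  rw [e1, e2]
  exact bounded_case hα0 hα1 hC good N₁ N₂ hN₁ hN₂ hne
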